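/- Let P be a Borel probability measure on P₂(ℝ), the space of Borel probability measures on ℝ with finite second moment equipped with the 2-Wasserstein distance. For ρ ∈ P₂(ℝ) let Q_ρ : (0,1) → ℝ denote its quantile function (the generalized inverse of the cumulative distribution function of ρ). Then the measure μ_P = (∫ Q_ρ dP(ρ))_# λ_{[0,1]}, i.e. the pushforward of the Lebesgue measure on [0,1] under the map t ↦ ∫ Q_ρ(t) dP(ρ), is a Wasserstein barycenter of P: it minimizes μ ↦ ½∫ W₂²(ρ,μ) dP(ρ) over P₂(ℝ). -/

import Mathlib

noncomputable section

open MeasureTheory Metric Set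
open scoped ENNReal NNReal RealInnerProductSpace

/-- The set of transport plans (couplings) between two measures. -/
def Couplings {α β : Type*} [MeasurableSpace α] [MeasurableSpace β]
    (ρ : Measure α) (μ : Measure β) : Set (Measure (α × β)) :=
  {γ | γ.map Prod.fst = ρ ∧ γ.map Prod.snd = μ}

/-- The 2-Wasserstein distance between two measures on a normed space. -/
def W2 {α : Type*} [MeasurableSpace α] [NormedAddCommGroup α] (ρ μ : Measure α) : ℝ :=
  Real.sqrt (sInf ((fun γ : Measure (α × α) => ∫ p, ‖p.1 - p.2‖ ^ 2 ∂γ) '' Couplings ρ μ))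

/-- The 1-Wasserstein distance between measures on the space of measures,
with ground cost `W2`. -/
def Wc1 {α : Type*} [MeasurableSpace α] [NormedAddCommGroup α]
    (P Q : Measure (Measure α)) : ℝ :=
  sInf ((fun γ : Measure (Measure α × Measure α) => ∫ p, W2 p.1 p.2 ∂γ) '' Couplings P Q)

/-- The variance functional `F_P`. -/
def Fvar {α : Type*} [MeasurableSpace α] [NormedAddCommGroup α]
    (P : Measure (Measure α)) (μ : Measure α) : ℝ :=
  (1 / 2) * ∫ ρ, W2 ρ μ ^ 2 ∂P

abbrev Euc (d : ℕ) : Type := EuclideanSpace ℝ (Fin d)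

/-- `ρ` is a Borel probability measure concentrated on `Ω`. -/
def ProbOn {d : ℕ} (Ω : Set (Euc d)) (ρ : Measure (Euc d)) : Prop :=
  IsProbabilityMeasure ρ ∧ ρ Ωᶜ = 0

/-- `P` is a Borel probability measure on the probability measures over `Ω`. -/
def PProbOn {d : ℕ} (Ω : Set (Euc d)) (P : Measure (Measure (Euc d))) : Prop :=
  IsProbabilityMeasure P ∧ P {ρ | ¬ ProbOn Ω ρ} = 0

/-- `μ` is a Wasserstein barycenter of `P` (a minimizer of `Fvar P` over `P(Ω)`). -/
def IsBary {d : ℕ} (Ω : Set (Euc d)) (P : Measure (Measure (Euc d)))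
    (μ : Measure (Euc d)) : Prop :=
  ProbOn Ω μ ∧ ∀ ν, ProbOn Ω ν → Fvar P μ ≤ Fvar P ν

/-- `ρ ∈ P₂(ℝ)`: a Borel probability measure on `ℝ` with finite second moment. -/
def FinSecond (ρ : Measure ℝ) : Prop :=
  IsProbabilityMeasure ρ ∧ (∫⁻ x, ENNReal.ofReal (x ^ 2) ∂ρ) < ⊤

/-- The quantile function of `ρ`: the generalized inverse of its cumulative
distribution function. -/
def quantile (ρ : Measure ℝ) (t : ℝ) : ℝ :=
  sInf {x : ℝ | t ≤ (ρ (Set.Iic x)).toReal}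

open ProbabilityTheory Function
open scoped Topology

/-!
The isometry `ρ ↦ Q_ρ` embeds `(P₂(ℝ), W₂)` into `L²([0, 1])`, where the mean of a square-integrable
family minimizes the average squared distance. Only `W₂(ρ, g_# λ) ≤ ‖Q_ρ - g‖` is needed at the
mean `g` of the quantile functions, so it is not necessary to know that `g` is itself a quantile
function.

For the lower bound `‖Q_ρ - Q_ν‖² ≤ W₂²(ρ, ν)`, write the one-sided cost `((y - x)⁺)²` as the
area of the square `[x, y)²`. By Tonelli, the cost of a plan `γ` is then an integral over `(a, b)`
of the quantities `γ {x ≤ a ⊓ b, a ⊔ b < y}`. These are at least `ρ (-∞, a ⊓ b] - ν (-∞, a ⊔ b]`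
(truncated at zero), with equality for the plan given by the quantile functions.
-/

section QuadraticMean

variable {Ω T E : Type*} [MeasurableSpace Ω] [MeasurableSpace T] [NormedAddCommGroup E]

lemma integral_norm_sub_sq_eq_add [InnerProductSpace ℝ E] [CompleteSpace E] {P : Measure Ω}
    [IsProbabilityMeasure P] {f : Ω → E} (hf : MemLp f 2 P) (c : E) :
    ∫ ω, ‖f ω - c‖ ^ 2 ∂P = ∫ ω, ‖f ω - P[f]‖ ^ 2 ∂P + ‖P[f] - c‖ ^ 2 := by
  set m := P[f] with hm
  have hfi : Integrable f P := hf.integrable one_le_two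
  have hdev : Integrable (fun ω ↦ f ω - m) P := hfi.sub (integrable_const m)
  have hsq : Integrable (fun ω ↦ ‖f ω - m‖ ^ 2) P :=
    (hf.sub (memLp_const m)).integrable_norm_pow two_ne_zero
  have horth : ∫ ω, ⟪m - c, f ω - m⟫ ∂P = 0 := by
    rw [integral_inner hdev, integral_sub hfi (integrable_const m), integral_const, probReal_univ,
      one_smul, hm, sub_self, inner_zero_right]
  have hexpand (ω : Ω) :
      ‖f ω - c‖ ^ 2 = ‖f ω - m‖ ^ 2 + 2 * ⟪m - c, f ω - m⟫ + ‖m - c‖ ^ 2 := by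
    rw [← sub_add_sub_cancel (f ω) m c, norm_add_sq_real, real_inner_comm]
  have hinner : Integrable (fun ω ↦ 2 * ⟪m - c, f ω - m⟫) P :=
    (hdev.const_inner (m - c)).const_mul 2
  simp_rw [hexpand]
  rw [integral_add (by exact hsq.add hinner) (integrable_const _), integral_add hsq hinner,
    integral_const_mul, horth, mul_zero, add_zero, integral_const, probReal_univ, one_smul]

lemma ae_memLp_two_curry_right {P : Measure Ω} [SFinite P] {τ : Measure T} [SFinite τ]
    {f : Ω → T → E} (hf : MemLp (uncurry f) 2 (P.prod τ)) :
    ∀ᵐ t ∂τ, MemLp (fun ω ↦ f ω t) 2 P := by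
  filter_upwards [hf.1.prod_swap.prodMk_left,
    (hf.integrable_norm_pow two_ne_zero).prod_left_ae] with t hmeas hsq
  exact (memLp_two_iff_integrable_sq_norm hmeas).2 hsq

lemma integrable_norm_uncurry_sub_sq {P : Measure Ω} [IsFiniteMeasure P] {τ : Measure T}
    [SFinite τ] {f : Ω → T → E} {g : T → E} (hf : MemLp (uncurry f) 2 (P.prod τ))
    (hg : MemLp g 2 τ) : Integrable (uncurry fun ω t ↦ ‖f ω t - g t‖ ^ 2) (P.prod τ) :=
  (hf.sub (hg.comp_snd P)).integrable_norm_pow two_ne_zero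

variable [InnerProductSpace ℝ E] [CompleteSpace E] {P : Measure Ω} [IsProbabilityMeasure P]
  {τ : Measure T} [SFinite τ] {f : Ω → T → E}

lemma memLp_two_integral_left (hf : MemLp (uncurry f) 2 (P.prod τ)) :
    MemLp (fun t ↦ ∫ ω, f ω t ∂P) 2 τ := by
  have hmeas : AEStronglyMeasurable (fun t ↦ ∫ ω, f ω t ∂P) τ := hf.1.prod_swap.integral_prod_right'
  refine (memLp_two_iff_integrable_sq_norm hmeas).2 <|
    (hf.integrable_norm_pow two_ne_zero).integral_prod_right.mono' (hmeas.norm.pow 2) ?_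
  filter_upwards [ae_memLp_two_curry_right hf] with t ht
  calc ‖‖∫ ω, f ω t ∂P‖ ^ 2‖
      = ‖∫ ω, f ω t ∂P‖ ^ 2 := Real.norm_of_nonneg (by positivity)
    _ ≤ ∫ ω, ‖f ω t - ∫ ω', f ω' t ∂P‖ ^ 2 ∂P + ‖∫ ω, f ω t ∂P‖ ^ 2 :=
        le_add_of_nonneg_left (integral_nonneg fun ω ↦ by positivity)
    _ = ∫ ω, ‖f ω t‖ ^ 2 ∂P := by
        simpa only [sub_zero] using (integral_norm_sub_sq_eq_add ht 0).symm

lemma integral_integral_norm_sub_integral_sq_le (hf : MemLp (uncurry f) 2 (P.prod τ))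
    {g : T → E} (hg : MemLp g 2 τ) :
    ∫ ω, ∫ t, ‖f ω t - ∫ ω', f ω' t ∂P‖ ^ 2 ∂τ ∂P ≤ ∫ ω, ∫ t, ‖f ω t - g t‖ ^ 2 ∂τ ∂P := by
  have hmean := integrable_norm_uncurry_sub_sq hf (memLp_two_integral_left hf)
  have hdev := integrable_norm_uncurry_sub_sq hf hg
  rw [integral_integral_swap hmean, integral_integral_swap hdev]
  refine integral_mono_ae hmean.integral_prod_right hdev.integral_prod_right ?_
  filter_upwards [ae_memLp_two_curry_right hf] with t ht
  exact (le_add_of_nonneg_right (by positivity)).trans_eq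
    (integral_norm_sub_sq_eq_add ht (g t)).symm

end QuadraticMean

section Couplings

variable {Ω α β : Type*} [MeasurableSpace Ω] [MeasurableSpace α] [MeasurableSpace β]

lemma measurePreserving_fst_of_mem_couplings {ρ : Measure α} {μ : Measure β}
    {γ : Measure (α × β)} (hγ : γ ∈ Couplings ρ μ) : MeasurePreserving Prod.fst γ ρ :=
  ⟨measurable_fst, hγ.1⟩

lemma measurePreserving_snd_of_mem_couplings {ρ : Measure α} {μ : Measure β}
    {γ : Measure (α × β)} (hγ : γ ∈ Couplings ρ μ) : MeasurePreserving Prod.snd γ μ :=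
  ⟨measurable_snd, hγ.2⟩

lemma isProbabilityMeasure_of_mem_couplings {ρ : Measure α} [IsProbabilityMeasure ρ]
    {μ : Measure β} {γ : Measure (α × β)} (hγ : γ ∈ Couplings ρ μ) : IsProbabilityMeasure γ := by
  have : IsProbabilityMeasure (γ.map Prod.fst) := hγ.1 ▸ inferInstance
  exact Measure.isProbabilityMeasure_of_map Prod.fst

lemma measure_sub_le_measure_prod_compl {ρ : Measure α} {μ : Measure β} {γ : Measure (α × β)}
    (hγ : γ ∈ Couplings ρ μ) {s : Set α} {t : Set β} (hs : MeasurableSet s)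
    (ht : MeasurableSet t) : ρ s - μ t ≤ γ (s ×ˢ tᶜ) := by
  have hdiff : s ×ˢ tᶜ = Prod.fst ⁻¹' s \ Prod.snd ⁻¹' t := by
    rw [prod_eq, preimage_compl, sdiff_eq]
  rw [hdiff,
    ← (measurePreserving_fst_of_mem_couplings hγ).measure_preimage hs.nullMeasurableSet,
    ← (measurePreserving_snd_of_mem_couplings hγ).measure_preimage ht.nullMeasurableSet]
  exact le_measure_sdiff

lemma map_swap_mem_couplings {ρ : Measure α} {μ : Measure β} {γ : Measure (α × β)}
    (hγ : γ ∈ Couplings ρ μ) : γ.map Prod.swap ∈ Couplings μ ρ := by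
  constructor
  · rw [Measure.map_map measurable_fst measurable_swap]
    exact hγ.2
  · rw [Measure.map_map measurable_snd measurable_swap]
    exact hγ.1

lemma map_prodMk_mem_couplings {τ : Measure Ω} {X : Ω → α} {Y : Ω → β} (hX : AEMeasurable X τ)
    (hY : AEMeasurable Y τ) : τ.map (fun ω ↦ (X ω, Y ω)) ∈ Couplings (τ.map X) (τ.map Y) :=
  ⟨AEMeasurable.map_map_of_aemeasurable measurable_fst.aemeasurable (hX.prodMk hY),
    AEMeasurable.map_map_of_aemeasurable measurable_snd.aemeasurable (hX.prodMk hY)⟩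

variable [NormedAddCommGroup α]

lemma W2_sq (ρ μ : Measure α) :
    W2 ρ μ ^ 2 =
      sInf ((fun γ : Measure (α × α) ↦ ∫ p, ‖p.1 - p.2‖ ^ 2 ∂γ) '' Couplings ρ μ) := by
  refine Real.sq_sqrt (Real.sInf_nonneg ?_)
  rintro _ ⟨γ, -, rfl⟩
  exact integral_nonneg fun p ↦ by positivity

lemma W2_sq_le_integral {ρ μ : Measure α} {γ : Measure (α × α)} (hγ : γ ∈ Couplings ρ μ) :
    W2 ρ μ ^ 2 ≤ ∫ p, ‖p.1 - p.2‖ ^ 2 ∂γ := by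
  rw [W2_sq]
  refine csInf_le ⟨0, ?_⟩ (mem_image_of_mem _ hγ)
  rintro _ ⟨γ', -, rfl⟩
  exact integral_nonneg fun p ↦ by positivity

lemma W2_sq_map_le_integral [BorelSpace α] [SecondCountableTopology α] {τ : Measure Ω}
    {X Y : Ω → α} (hX : AEMeasurable X τ) (hY : AEMeasurable Y τ) :
    W2 (τ.map X) (τ.map Y) ^ 2 ≤ ∫ ω, ‖X ω - Y ω‖ ^ 2 ∂τ := by
  refine (W2_sq_le_integral (map_prodMk_mem_couplings hX hY)).trans_eq ?_
  exact integral_map (hX.prodMk hY) (by fun_prop)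

end Couplings

lemma finSecond_iff_memLp_id {ρ : Measure ℝ} :
    FinSecond ρ ↔ IsProbabilityMeasure ρ ∧ MemLp id 2 ρ := by
  rw [FinSecond, memLp_two_iff_integrable_sq aestronglyMeasurable_id,
    ← hasFiniteIntegral_iff_ofReal (ae_of_all _ fun x ↦ sq_nonneg x), Integrable,
    and_iff_right (a := AEStronglyMeasurable _ ρ) (by fun_prop)]
  rfl

lemma finSecond_map_iff {Ω : Type*} [MeasurableSpace Ω] {τ : Measure Ω} [IsProbabilityMeasure τ]
    {X : Ω → ℝ} (hX : AEMeasurable X τ) : FinSecond (τ.map X) ↔ MemLp X 2 τ := by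
  rw [finSecond_iff_memLp_id, memLp_map_measure_iff aestronglyMeasurable_id hX,
    and_iff_right (Measure.isProbabilityMeasure_map hX), id_comp]

lemma memLp_fst_sub_snd_of_mem_couplings {ρ ν : Measure ℝ} (hρ : FinSecond ρ) (hν : FinSecond ν)
    {γ : Measure (ℝ × ℝ)} (hγ : γ ∈ Couplings ρ ν) : MemLp (fun p : ℝ × ℝ ↦ p.1 - p.2) 2 γ :=
  ((finSecond_iff_memLp_id.1 hρ).2.comp_measurePreserving
    (measurePreserving_fst_of_mem_couplings hγ)).sub
  ((finSecond_iff_memLp_id.1 hν).2.comp_measurePreserving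
    (measurePreserving_snd_of_mem_couplings hγ))

section QuadraticCost

lemma volume_Ico_prod_Ico_self (x y : ℝ) :
    volume (Ico x y ×ˢ Ico x y) = ENNReal.ofReal (y - x) ^ 2 := by
  rw [Measure.volume_eq_prod, Measure.prod_prod, Real.volume_Ico, sq]

lemma lintegral_ofReal_sub_sq (γ : Measure (ℝ × ℝ)) [SFinite γ] :
    ∫⁻ p, ENNReal.ofReal (p.2 - p.1) ^ 2 ∂γ =
      ∫⁻ z : ℝ × ℝ, γ (Iic (z.1 ⊓ z.2) ×ˢ Ioi (z.1 ⊔ z.2)) := by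
  let S : Set ((ℝ × ℝ) × (ℝ × ℝ)) := {w | w.2 ∈ Ico w.1.1 w.1.2 ×ˢ Ico w.1.1 w.1.2}
  have hS : MeasurableSet S := by
    simp only [S, mem_prod, mem_Ico]
    measurability
  have hsection (z : ℝ × ℝ) : (fun p ↦ (p, z)) ⁻¹' S = Iic (z.1 ⊓ z.2) ×ˢ Ioi (z.1 ⊔ z.2) := by
    ext p
    simp only [S, mem_preimage, mem_ofPred_eq, mem_prod, mem_Ico, mem_Iic, mem_Ioi, le_inf_iff,
      sup_lt_iff]
    exact and_and_and_comm
  calc ∫⁻ p, ENNReal.ofReal (p.2 - p.1) ^ 2 ∂γ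
      = ∫⁻ p, volume (Prod.mk p ⁻¹' S) ∂γ :=
        lintegral_congr fun p ↦ (volume_Ico_prod_Ico_self p.1 p.2).symm
    _ = (γ.prod volume) S := (Measure.prod_apply hS).symm
    _ = ∫⁻ z : ℝ × ℝ, γ (Iic (z.1 ⊓ z.2) ×ˢ Ioi (z.1 ⊔ z.2)) := by
        simp only [Measure.prod_apply_symm hS, hsection]

lemma ofReal_sub_sq_add_ofReal_sub_sq (x y : ℝ) :
    ENNReal.ofReal (y - x) ^ 2 + ENNReal.ofReal (x - y) ^ 2 = ENNReal.ofReal ((x - y) ^ 2) := by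
  rcases le_total x y with h | h
  · rw [ENNReal.ofReal_of_nonpos (sub_nonpos.2 h), zero_pow two_ne_zero, add_zero,
      ← ENNReal.ofReal_pow (sub_nonneg.2 h), sub_sq_comm]
  · rw [ENNReal.ofReal_of_nonpos (sub_nonpos.2 h), zero_pow two_ne_zero, zero_add,
      ← ENNReal.ofReal_pow (sub_nonneg.2 h)]

lemma lintegral_sub_sq_eq_add_map_swap (γ : Measure (ℝ × ℝ)) :
    ∫⁻ p, ENNReal.ofReal ((p.1 - p.2) ^ 2) ∂γ =
      ∫⁻ p, ENNReal.ofReal (p.2 - p.1) ^ 2 ∂γ +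
        ∫⁻ p, ENNReal.ofReal (p.2 - p.1) ^ 2 ∂(γ.map Prod.swap) := by
  rw [lintegral_map (by fun_prop) measurable_swap, ← lintegral_add_left (by fun_prop)]
  exact lintegral_congr fun p ↦ (ofReal_sub_sq_add_ofReal_sub_sq p.1 p.2).symm

end QuadraticCost

section Quantile

/-- The uniform distribution on `[0, 1]`, as a measure on `ℝ`. -/
abbrev uniform01 : Measure ℝ := volume.restrict (Icc 0 1)

instance : IsProbabilityMeasure uniform01 := ⟨by simp⟩

lemma ae_uniform01_mem_Ioo : ∀ᵐ t ∂uniform01, t ∈ Ioo (0 : ℝ) 1 := by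
  rw [uniform01, ← Measure.restrict_congr_set Ioo_ae_eq_Icc]
  exact ae_restrict_mem measurableSet_Ioo

lemma uniform01_Iic {c : ℝ} (hc : c ≤ 1) : uniform01 (Iic c) = ENNReal.ofReal c := by
  rw [Measure.restrict_apply measurableSet_Iic, inter_comm, ← Ici_inter_Iic, inter_assoc,
    Iic_inter_Iic, min_eq_right hc, Ici_inter_Iic, Real.volume_Icc, sub_zero]

lemma uniform01_Ioc {a b : ℝ} (ha : 0 ≤ a) (hb : b ≤ 1) :
    uniform01 (Ioc a b) = ENNReal.ofReal (b - a) := by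
  rw [Measure.restrict_eq_self volume (Ioc_subset_Icc_self.trans (Icc_subset_Icc ha hb)),
    Real.volume_Ioc]

lemma quantile_le_iff (ρ : Measure ℝ) [IsProbabilityMeasure ρ] {t : ℝ} (ht : t ∈ Ioo (0 : ℝ) 1)
    (x : ℝ) : quantile ρ t ≤ x ↔ t ≤ cdf ρ x := by
  have hquantile : quantile ρ t = sInf {y | t ≤ cdf ρ y} := by
    simp only [quantile, cdf_eq_real, Measure.real]
  have hne : {y | t ≤ cdf ρ y}.Nonempty :=
    ((tendsto_cdf_atTop ρ).eventually (le_mem_nhds ht.2)).exists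
  have hbdd : BddBelow {y | t ≤ cdf ρ y} := by
    obtain ⟨b, hb⟩ := ((tendsto_cdf_atBot ρ).eventually (gt_mem_nhds ht.1)).exists
    exact ⟨b, fun y hy ↦ ((monotone_cdf ρ).reflect_lt (hb.trans_le hy)).le⟩
  rw [hquantile]
  refine ⟨fun hx ↦ ?_, fun hx ↦ csInf_le hbdd hx⟩
  have hright : Filter.Tendsto (cdf ρ) (𝓝[>] x) (𝓝 (cdf ρ x)) :=
    ((cdf ρ).right_continuous x).mono_left (nhdsWithin_mono x Ioi_subset_Ici_self)
  refine ge_of_tendsto hright (eventually_mem_nhdsWithin.mono fun y hy ↦ ?_)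
  obtain ⟨z, hz, hzy⟩ := exists_lt_of_csInf_lt hne (hx.trans_lt hy)
  exact hz.trans (monotone_cdf ρ hzy.le)

lemma aemeasurable_of_nullMeasurableSet_preimage_Iic {Ω α : Type*} [MeasurableSpace Ω]
    [TopologicalSpace α] [SecondCountableTopology α] [LinearOrder α] [OrderTopology α]
    [MeasurableSpace α] [BorelSpace α] {μ : Measure Ω} {f : Ω → α}
    (hf : ∀ x, NullMeasurableSet (f ⁻¹' Iic x) μ) : AEMeasurable f μ :=
  NullMeasurable.aemeasurable (measurable_of_Iic (δ := NullMeasurableSpace Ω μ) hf)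

lemma quantile_preimage_Iic_ae_eq (ρ : Measure ℝ) [IsProbabilityMeasure ρ] (x : ℝ) :
    quantile ρ ⁻¹' Iic x =ᵐ[uniform01] Iic (cdf ρ x) := by
  filter_upwards [ae_uniform01_mem_Ioo] with t ht
  exact propext (quantile_le_iff ρ ht x)

lemma aemeasurable_quantile (ρ : Measure ℝ) [IsProbabilityMeasure ρ] :
    AEMeasurable (quantile ρ) uniform01 :=
  aemeasurable_of_nullMeasurableSet_preimage_Iic fun x ↦
    measurableSet_Iic.nullMeasurableSet.congr (quantile_preimage_Iic_ae_eq ρ x).symm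

lemma aemeasurable_uncurry_quantile {P : Measure (Measure ℝ)} [SFinite P]
    (hP : ∀ᵐ ρ ∂P, IsProbabilityMeasure ρ) :
    AEMeasurable (uncurry quantile) (P.prod uniform01) := by
  refine aemeasurable_of_nullMeasurableSet_preimage_Iic fun x ↦ ?_
  have hmeas : MeasurableSet {p : Measure ℝ × ℝ | p.2 ≤ (p.1 (Iic x)).toReal} :=
    measurableSet_le measurable_snd
      ((Measure.measurable_coe measurableSet_Iic).comp measurable_fst).ennreal_toReal
  refine hmeas.nullMeasurableSet.congr ?_
  filter_upwards [Measure.quasiMeasurePreserving_fst.ae hP,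
    Measure.quasiMeasurePreserving_snd.ae ae_uniform01_mem_Ioo] with p hρ ht
  refine propext (Iff.trans ?_ (quantile_le_iff p.1 ht x).symm)
  rw [cdf_eq_real]
  rfl

lemma map_quantile (ρ : Measure ℝ) [IsProbabilityMeasure ρ] :
    uniform01.map (quantile ρ) = ρ := by
  have := Measure.isProbabilityMeasure_map (aemeasurable_quantile ρ)
  refine Measure.ext_of_Iic _ _ fun x ↦ ?_
  rw [Measure.map_apply_of_aemeasurable (aemeasurable_quantile ρ) measurableSet_Iic,
    measure_congr (quantile_preimage_Iic_ae_eq ρ x), uniform01_Iic (cdf_le_one ρ x), ofReal_cdf]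

/-- The monotone coupling of two measures on `ℝ`: the law of the pair of their quantile functions
at a common uniform parameter. It is the optimal transport plan for the quadratic cost. -/
def quantileCoupling (ρ ν : Measure ℝ) : Measure (ℝ × ℝ) :=
  uniform01.map fun t ↦ (quantile ρ t, quantile ν t)

variable {ρ ν : Measure ℝ}

section Probability

variable [IsProbabilityMeasure ρ] [IsProbabilityMeasure ν]

lemma quantileCoupling_mem_couplings : quantileCoupling ρ ν ∈ Couplings ρ ν := by
  have hmem := map_prodMk_mem_couplings (aemeasurable_quantile ρ) (aemeasurable_quantile ν)
  rwa [map_quantile, map_quantile] at hmem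

lemma map_swap_quantileCoupling :
    (quantileCoupling ρ ν).map Prod.swap = quantileCoupling ν ρ :=
  AEMeasurable.map_map_of_aemeasurable measurable_swap.aemeasurable
    ((aemeasurable_quantile ρ).prodMk (aemeasurable_quantile ν))

lemma quantileCoupling_Iic_prod_Ioi (a b : ℝ) :
    quantileCoupling ρ ν (Iic a ×ˢ Ioi b) = ρ (Iic a) - ν (Iic b) := by
  have hpreimage : (fun t ↦ (quantile ρ t, quantile ν t)) ⁻¹' (Iic a ×ˢ Ioi b)
      =ᵐ[uniform01] Ioc (cdf ν b) (cdf ρ a) := by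
    rw [mk_preimage_prod, inter_comm, ← Ioi_inter_Iic, ← compl_Iic, ← compl_Iic, preimage_compl]
    exact (quantile_preimage_Iic_ae_eq ν b).compl.inter (quantile_preimage_Iic_ae_eq ρ a)
  rw [quantileCoupling, Measure.map_apply_of_aemeasurable
      ((aemeasurable_quantile ρ).prodMk (aemeasurable_quantile ν))
      (measurableSet_Iic.prod measurableSet_Ioi), measure_congr hpreimage,
    uniform01_Ioc (cdf_nonneg ν b) (cdf_le_one ρ a), ENNReal.ofReal_sub _ (cdf_nonneg ν b),
    ofReal_cdf, ofReal_cdf]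

lemma lintegral_ofReal_sub_sq_quantileCoupling_le {γ : Measure (ℝ × ℝ)}
    (hγ : γ ∈ Couplings ρ ν) :
    ∫⁻ p, ENNReal.ofReal (p.2 - p.1) ^ 2 ∂(quantileCoupling ρ ν) ≤
      ∫⁻ p, ENNReal.ofReal (p.2 - p.1) ^ 2 ∂γ := by
  have : IsProbabilityMeasure (quantileCoupling ρ ν) :=
    isProbabilityMeasure_of_mem_couplings quantileCoupling_mem_couplings
  have : IsProbabilityMeasure γ := isProbabilityMeasure_of_mem_couplings hγ
  rw [lintegral_ofReal_sub_sq, lintegral_ofReal_sub_sq]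
  refine lintegral_mono fun z ↦ ?_
  rw [quantileCoupling_Iic_prod_Ioi, ← compl_Iic]
  exact measure_sub_le_measure_prod_compl hγ measurableSet_Iic measurableSet_Iic

lemma lintegral_sub_sq_quantileCoupling_le {γ : Measure (ℝ × ℝ)} (hγ : γ ∈ Couplings ρ ν) :
    ∫⁻ p, ENNReal.ofReal ((p.1 - p.2) ^ 2) ∂(quantileCoupling ρ ν) ≤
      ∫⁻ p, ENNReal.ofReal ((p.1 - p.2) ^ 2) ∂γ := by
  rw [lintegral_sub_sq_eq_add_map_swap, lintegral_sub_sq_eq_add_map_swap γ,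
    map_swap_quantileCoupling]
  exact add_le_add (lintegral_ofReal_sub_sq_quantileCoupling_le hγ)
    (lintegral_ofReal_sub_sq_quantileCoupling_le (map_swap_mem_couplings hγ))

end Probability

lemma integral_sub_sq_quantileCoupling_le (hρ : FinSecond ρ) (hν : FinSecond ν)
    {γ : Measure (ℝ × ℝ)} (hγ : γ ∈ Couplings ρ ν) :
    ∫ p, ‖p.1 - p.2‖ ^ 2 ∂(quantileCoupling ρ ν) ≤ ∫ p, ‖p.1 - p.2‖ ^ 2 ∂γ := by
  have := hρ.1
  have := hν.1
  have hint {γ' : Measure (ℝ × ℝ)} (hγ' : γ' ∈ Couplings ρ ν) :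
      Integrable (fun p : ℝ × ℝ ↦ (p.1 - p.2) ^ 2) γ' :=
    (memLp_fst_sub_snd_of_mem_couplings hρ hν hγ').integrable_sq
  simp only [Real.norm_eq_abs, sq_abs]
  rw [← ENNReal.ofReal_le_ofReal_iff (integral_nonneg fun p ↦ sq_nonneg _),
    ofReal_integral_eq_lintegral_ofReal (hint quantileCoupling_mem_couplings)
      (ae_of_all _ fun p ↦ sq_nonneg _),
    ofReal_integral_eq_lintegral_ofReal (hint hγ) (ae_of_all _ fun p ↦ sq_nonneg _)]
  exact lintegral_sub_sq_quantileCoupling_le hγ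

lemma W2_sq_eq_integral_quantile (hρ : FinSecond ρ) (hν : FinSecond ν) :
    W2 ρ ν ^ 2 = ∫ t, ‖quantile ρ t - quantile ν t‖ ^ 2 ∂uniform01 := by
  have := hρ.1
  have := hν.1
  have hcost : ∫ p, ‖p.1 - p.2‖ ^ 2 ∂(quantileCoupling ρ ν) =
      ∫ t, ‖quantile ρ t - quantile ν t‖ ^ 2 ∂uniform01 :=
    integral_map ((aemeasurable_quantile ρ).prodMk (aemeasurable_quantile ν)) (by fun_prop)
  rw [W2_sq, ← hcost]
  refine IsLeast.csInf_eq ⟨mem_image_of_mem _ quantileCoupling_mem_couplings, ?_⟩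
  rintro _ ⟨γ, hγ, rfl⟩
  exact integral_sub_sq_quantileCoupling_le hρ hν hγ

lemma memLp_two_quantile (hρ : FinSecond ρ) : MemLp (quantile ρ) 2 uniform01 := by
  have := hρ.1
  rwa [← finSecond_map_iff (aemeasurable_quantile ρ), map_quantile]

end Quantile

section QuantileAverage

variable {P : Measure (Measure ℝ)}

lemma memLp_two_uncurry_quantile [SFinite P] (hP : ∀ᵐ ρ ∂P, IsProbabilityMeasure ρ)
    (hmom : ∫⁻ ρ, ∫⁻ x, ENNReal.ofReal (x ^ 2) ∂ρ ∂P < ⊤) :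
    MemLp (uncurry quantile) 2 (P.prod uniform01) := by
  have hmeas := aemeasurable_uncurry_quantile hP
  refine (memLp_two_iff_integrable_sq hmeas.aestronglyMeasurable).2
    ⟨(hmeas.pow_const 2).aestronglyMeasurable, ?_⟩
  rw [hasFiniteIntegral_iff_ofReal (ae_of_all _ fun p ↦ sq_nonneg _),
    lintegral_prod _ (hmeas.pow_const 2).ennreal_ofReal]
  refine lt_of_eq_of_lt (lintegral_congr_ae ?_) hmom
  filter_upwards [hP] with ρ hρ
  conv_rhs => rw [← map_quantile ρ, lintegral_map' (by fun_prop) (aemeasurable_quantile ρ)]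
  rfl

lemma Fvar_eq_integral_quantile (hP : ∀ᵐ ρ ∂P, FinSecond ρ) {ν : Measure ℝ} (hν : FinSecond ν) :
    Fvar P ν = (1 / 2) * ∫ ρ, ∫ t, ‖quantile ρ t - quantile ν t‖ ^ 2 ∂uniform01 ∂P := by
  rw [Fvar]
  congr 1
  refine integral_congr_ae ?_
  filter_upwards [hP] with ρ hρ
  exact W2_sq_eq_integral_quantile hρ hν

lemma Fvar_map_le_integral_quantile [IsFiniteMeasure P]
    (hP : ∀ᵐ ρ ∂P, IsProbabilityMeasure ρ)
    (hquantile : MemLp (uncurry quantile) 2 (P.prod uniform01)) {g : ℝ → ℝ}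
    (hg : MemLp g 2 uniform01) :
    Fvar P (uniform01.map g) ≤
      (1 / 2) * ∫ ρ, ∫ t, ‖quantile ρ t - g t‖ ^ 2 ∂uniform01 ∂P := by
  rw [Fvar]
  refine mul_le_mul_of_nonneg_left ?_ one_half_pos.le
  refine integral_mono_of_nonneg (ae_of_all _ fun ρ ↦ sq_nonneg _)
    (integrable_norm_uncurry_sub_sq hquantile hg).integral_prod_left ?_
  filter_upwards [hP] with ρ hρ
  have hle := W2_sq_map_le_integral (aemeasurable_quantile ρ) hg.1.aemeasurable
  rwa [map_quantile] at hle

end QuantileAverage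

/-- **One-dimensional Wasserstein barycenters via quantile averaging.**
The pushforward of Lebesgue measure on `[0,1]` under the `P`-average of the
quantile functions is a Wasserstein barycenter of `P`: it lies in `P₂(ℝ)` and
minimizes the variance functional `F_P` over `P₂(ℝ)`. -/
theorem quantile_average_is_barycenter
    (P : Measure (Measure ℝ)) (hP : IsProbabilityMeasure P)
    (hPsupp : P {ρ | ¬ FinSecond ρ} = 0)
    (hPmom : (∫⁻ ρ, ∫⁻ x, ENNReal.ofReal (x ^ 2) ∂ρ ∂P) < ⊤) :
    FinSecond
      (Measure.map (fun t => ∫ ρ, quantile ρ t ∂P)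
        (volume.restrict (Set.Icc (0 : ℝ) 1))) ∧
    ∀ ν : Measure ℝ, FinSecond ν →
      Fvar P (Measure.map (fun t => ∫ ρ, quantile ρ t ∂P)
          (volume.restrict (Set.Icc (0 : ℝ) 1))) ≤ Fvar P ν := by
  have hfin : ∀ᵐ ρ ∂P, FinSecond ρ := hPsupp
  have hprob : ∀ᵐ ρ ∂P, IsProbabilityMeasure ρ := hfin.mono fun ρ hρ ↦ hρ.1
  have hquantile := memLp_two_uncurry_quantile hprob hPmom
  have haverage := memLp_two_integral_left hquantile
  refine ⟨(finSecond_map_iff haverage.1.aemeasurable).2 haverage, fun ν hν ↦ ?_⟩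
  calc Fvar P (uniform01.map fun t ↦ ∫ ρ, quantile ρ t ∂P)
      ≤ (1 / 2) * ∫ ρ, ∫ t, ‖quantile ρ t - ∫ ρ', quantile ρ' t ∂P‖ ^ 2 ∂uniform01 ∂P :=
        Fvar_map_le_integral_quantile hprob hquantile haverage
    _ ≤ (1 / 2) * ∫ ρ, ∫ t, ‖quantile ρ t - quantile ν t‖ ^ 2 ∂uniform01 ∂P :=
        mul_le_mul_of_nonneg_left
          (integral_integral_norm_sub_integral_sq_le hquantile (memLp_two_quantile hν))
          one_half_pos.le
    _ = Fvar P ν := (Fvar_eq_integral_quantile hfin hν).symm
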